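/- Let W ⊆ ⟦𝕐⟧ be such that dim_H(⟦𝕐⟧ \ W) < 1/2. Then Player I has a winning pure strategy in the binary Gale–Stewart game with target set W; in particular, the game with target set W is determined. -/

import Mathlib

open Metric Set Filter MeasureTheory

noncomputable local instance : MetricSpace (ℕ → Bool) := PiNat.metricSpace

/-- The finite prefix `⟨x 0, …, x (n-1)⟩` of a play. -/
def prefixList (x : ℕ → Bool) (n : ℕ) : List Bool := List.ofFn fun i : Fin n => x i

/-- `x` is a play consistent with the Player I pure strategy `sI`. -/
def ConsistentI (sI : List Bool → Bool) (x : ℕ → Bool) : Prop :=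
  ∀ n : ℕ, Even n → x n = sI (prefixList x n)

/-- `x` is a play consistent with the Player II pure strategy `sII`. -/
def ConsistentII (sII : List Bool → Bool) (x : ℕ → Bool) : Prop :=
  ∀ n : ℕ, Odd n → x n = sII (prefixList x n)

open scoped ENNReal

theorem prefixList_succ (x : ℕ → Bool) (n : ℕ) :
    prefixList x (n + 1) = prefixList x n ++ [x n] := by
  simp only [prefixList, List.ofFn_succ_last, Fin.val_castSucc, Fin.val_last]

theorem length_prefixList (x : ℕ → Bool) (n : ℕ) : (prefixList x n).length = n := by
  simp [prefixList]

theorem prefixList_congr {x y : ℕ → Bool} {n : ℕ} (h : ∀ i < n, x i = y i) :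
    prefixList x n = prefixList y n := by
  unfold prefixList
  congr 1
  funext i
  exact h i i.2

/-- The mass that the atomic measure with weight `w n` at `c n` gives to the cylinder of
sequences extending `p`. -/
noncomputable def cylinderMass (c : ℕ → ℕ → Bool) (w : ℕ → ℝ≥0∞) (p : List Bool) : ℝ≥0∞ :=
  ∑' n, if prefixList (c n) p.length = p then w n else 0

/-- The Player I strategy that always moves to the child cylinder of smaller mass. -/
noncomputable def smallerMassStrategy (c : ℕ → ℕ → Bool) (w : ℕ → ℝ≥0∞) (p : List Bool) : Bool :=
  open Classical in decide (cylinderMass c w (p ++ [true]) ≤ cylinderMass c w (p ++ [false]))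

section CylinderMass

variable (c : ℕ → ℕ → Bool) (w : ℕ → ℝ≥0∞)

theorem cylinderMass_nil : cylinderMass c w [] = ∑' n, w n := by
  simp [cylinderMass, prefixList]

theorem cylinderMass_split (p : List Bool) :
    cylinderMass c w (p ++ [true]) + cylinderMass c w (p ++ [false]) = cylinderMass c w p := by
  unfold cylinderMass
  rw [← ENNReal.tsum_add]
  congr 1
  funext n
  have key (b : Bool) : prefixList (c n) (p ++ [b]).length = p ++ [b] ↔
      prefixList (c n) p.length = p ∧ c n p.length = b := by
    simp [prefixList_succ, List.append_eq_append_iff_of_size_eq_left, length_prefixList]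
  simp only [key]
  by_cases h : prefixList (c n) p.length = p <;> cases hb : c n p.length <;> simp [h]

theorem cylinderMass_append_le (p : List Bool) (b : Bool) :
    cylinderMass c w (p ++ [b]) ≤ cylinderMass c w p := by
  rw [← cylinderMass_split c w p]
  cases b
  · exact le_add_self
  · exact le_self_add

theorem two_mul_cylinderMass_smallerMassStrategy_le (p : List Bool) :
    2 * cylinderMass c w (p ++ [smallerMassStrategy c w p]) ≤ cylinderMass c w p := by
  rw [← cylinderMass_split c w p, two_mul]
  by_cases h : cylinderMass c w (p ++ [true]) ≤ cylinderMass c w (p ++ [false])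
  · simpa [smallerMassStrategy, h] using add_le_add_right h _
  · simpa [smallerMassStrategy, h] using add_le_add_left (le_of_not_ge h) _

variable {c w} in
theorem pow_mul_cylinderMass_le {x : ℕ → Bool}
    (hx : ConsistentI (smallerMassStrategy c w) x) (m : ℕ) :
    2 ^ m * cylinderMass c w (prefixList x (2 * m)) ≤ ∑' n, w n ∧
    2 ^ (m + 1) * cylinderMass c w (prefixList x (2 * m + 1)) ≤ ∑' n, w n := by
  have step (m : ℕ) : 2 ^ (m + 1) * cylinderMass c w (prefixList x (2 * m + 1)) ≤
      2 ^ m * cylinderMass c w (prefixList x (2 * m)) := by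
    rw [prefixList_succ, hx (2 * m) (even_two_mul m), pow_succ, mul_assoc]
    gcongr
    exact two_mul_cylinderMass_smallerMassStrategy_le c w _
  suffices h : 2 ^ m * cylinderMass c w (prefixList x (2 * m)) ≤ ∑' n, w n from
    ⟨h, (step m).trans h⟩
  induction m with
  | zero => simp [prefixList, cylinderMass_nil]
  | succ m ih =>
    refine le_trans ?_ ((step m).trans ih)
    rw [show 2 * (m + 1) = 2 * m + 1 + 1 by ring, prefixList_succ]
    gcongr
    exact cylinderMass_append_le c w _ _

variable {c w} in
theorem cylinderMass_sq_lt {x : ℕ → Bool} (hx : ConsistentI (smallerMassStrategy c w) x)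
    (hw : ∑' n, w n < 1) (l : ℕ) :
    cylinderMass c w (prefixList x l) ^ 2 < 2⁻¹ ^ l := by
  obtain ⟨j, hj, h⟩ : ∃ j, l ≤ 2 * j ∧
      2 ^ j * cylinderMass c w (prefixList x l) ≤ ∑' n, w n := by
    obtain ⟨m, rfl | rfl⟩ := Nat.even_or_odd' l
    · exact ⟨m, le_rfl, (pow_mul_cylinderMass_le hx m).1⟩
    · exact ⟨m + 1, by lia, (pow_mul_cylinderMass_le hx m).2⟩
  have h1 : (2 ^ j * cylinderMass c w (prefixList x l)) ^ 2 < 1 :=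
    pow_lt_one₀ zero_le (h.trans_lt hw) two_ne_zero
  by_contra! hle
  refine h1.not_ge ?_
  calc (1 : ℝ≥0∞) = 2 ^ l * 2⁻¹ ^ l := by
        rw [← mul_pow, ENNReal.mul_inv_cancel two_ne_zero ENNReal.ofNat_ne_top, one_pow]
    _ ≤ 2 ^ (2 * j) * cylinderMass c w (prefixList x l) ^ 2 := by
        gcongr
        exact one_le_two
    _ = _ := by rw [mul_pow, ← pow_mul, mul_comm j]

theorem le_cylinderMass {x : ℕ → Bool} {n l : ℕ} (h : prefixList x l = prefixList (c n) l) :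
    w n ≤ cylinderMass c w (prefixList x l) := by
  refine le_trans ?_ (ENNReal.le_tsum n)
  simp [length_prefixList, h]

end CylinderMass

/-- A set of diameter less than `a` lies in a cylinder of length `l` with `2⁻ˡ ≤ a`. -/
theorem exists_prefixList_eq_of_ediam_lt {t : Set (ℕ → Bool)} {a : ℝ≥0∞} (ht : ediam t < a) :
    ∃ (c : ℕ → Bool) (l : ℕ), (∀ x ∈ t, prefixList x l = prefixList c l) ∧ 2⁻¹ ^ l ≤ a := by
  classical
  have ha : ∃ l : ℕ, (2⁻¹ : ℝ≥0∞) ^ l ≤ a := by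
    obtain ⟨l, hl⟩ := ENNReal.exists_inv_two_pow_lt (pos_of_gt ht).ne'
    exact ⟨l, hl.le⟩
  obtain rfl | ⟨c, hc⟩ := t.eq_empty_or_nonempty
  · exact ⟨fun _ => false, ha.choose, by simp, ha.choose_spec⟩
  refine ⟨c, Nat.find ha, fun x hx => prefixList_congr fun i hi => ?_, Nat.find_spec ha⟩
  have hia : a < 2⁻¹ ^ i := not_le.1 (Nat.find_min ha hi)
  have hd : edist x c < 2⁻¹ ^ i := (edist_le_ediam_of_mem hx hc).trans_lt (ht.trans hia)
  refine PiNat.apply_eq_of_dist_lt ?_ le_rfl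
  rw [edist_dist, ENNReal.ofReal_lt_iff_lt_toReal dist_nonneg (by simp)] at hd
  simpa using hd

theorem exists_cover_of_dimH_lt_half {s : Set (ℕ → Bool)} (hs : dimH s < 1 / 2) :
    ∃ (t : ℕ → Set (ℕ → Bool)) (w : ℕ → ℝ≥0∞), s ⊆ ⋃ n, t n ∧
      (∀ n, ediam (t n) < w n ^ 2) ∧ ∑' n, w n < 1 := by
  borelize (ℕ → Bool)
  have h0 : Measure.hausdorffMeasure (1 / 2 : ℝ) s = 0 := by
    have := hausdorffMeasure_of_dimH_lt (s := s) (d := 1 / 2) (by simpa using hs)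
    simpa using this
  rw [Measure.hausdorffMeasure_apply] at h0
  simp only [ENNReal.iSup_eq_zero] at h0
  have h1 : _ < (2⁻¹ : ℝ≥0∞) := (h0 1 one_pos).trans_lt (by simp)
  simp only [iInf_lt_iff] at h1
  obtain ⟨t, hst, hdiam, hsum⟩ := h1
  obtain ⟨ε, hε, hεsum⟩ := ENNReal.exists_pos_sum_of_countable' (ε := 2⁻¹) (by simp) ℕ
  refine ⟨t, fun n => ediam (t n) ^ (1 / 2 : ℝ) + ε n, hst, fun n => ?_, ?_⟩
  · have hne : ediam (t n) ^ (1 / 2 : ℝ) ≠ ∞ :=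
      ENNReal.rpow_ne_top_of_nonneg (by norm_num) ((hdiam n).trans_lt ENNReal.one_lt_top).ne
    calc ediam (t n) = (ediam (t n) ^ (1 / 2 : ℝ)) ^ 2 := by
          rw [← ENNReal.rpow_mul_natCast]
          norm_num
      _ < _ := ENNReal.pow_lt_pow_left two_ne_zero (ENNReal.lt_add_right hne (hε n).ne')
  · rw [ENNReal.tsum_add, ← ENNReal.inv_two_add_inv_two]
    refine ENNReal.add_lt_add (lt_of_eq_of_lt ?_ hsum) hεsum
    congr 1
    funext n
    obtain h | h := (t n).eq_empty_or_nonempty <;> simp [h]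

/-- If `dim_H(⟦𝕐⟧ \ W) < 1/2` then Player I has a winning pure strategy in the binary
Gale–Stewart game with target set `W`; in particular the game is determined. -/
theorem playerI_wins_of_dimH_compl_lt_half (W : Set (ℕ → Bool)) (hW : dimH Wᶜ < 1 / 2) :
    (∃ sI : List Bool → Bool, ∀ x : ℕ → Bool, ConsistentI sI x → x ∈ W) ∧
    ((∃ sI : List Bool → Bool, ∀ x : ℕ → Bool, ConsistentI sI x → x ∈ W) ∨
      (∃ sII : List Bool → Bool, ∀ x : ℕ → Bool, ConsistentII sII x → x ∉ W)) := by
  suffices h : ∃ sI : List Bool → Bool, ∀ x : ℕ → Bool, ConsistentI sI x → x ∈ W from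
    ⟨h, Or.inl h⟩
  obtain ⟨t, w, hcover, hdiam, hsum⟩ := exists_cover_of_dimH_lt_half hW
  choose c l hc hl using fun n => exists_prefixList_eq_of_ediam_lt (hdiam n)
  refine ⟨smallerMassStrategy c w, fun x hx => ?_⟩
  by_contra hxW
  obtain ⟨n, hn⟩ := mem_iUnion.1 (hcover hxW)
  refine (cylinderMass_sq_lt hx hsum (l n)).not_ge ((hl n).trans ?_)
  gcongr
  exact le_cylinderMass c w (hc n x hn)
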